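/- arXiv:2401.05877 — 2 statements merged into one kernel-verified Lean document; each statement's English description precedes it below -/
import Mathlib

section
/- Let O be the ring of integers of a number field F and let K be an infinite algebraic extension of F which is totally ramified at a prime 𝔭 of F dividing the rational prime p (i.e., every finite subextension K'/F inside K is totally ramified at 𝔭). For every proper variety X over Spec(O), there exists a constant m > 0 such that for every O-morphism f : X → X, every element of Per_(p)(X(K), f) is at most m. -/
open AlgebraicGeometry CategoryTheory Limits Function NumberField

noncomputable section

set_option synthInstance.maxHeartbeats 1000000
set_option maxHeartbeats 1000000

/-- The set of `A`-valued points of `X` lying over `Spec.map φ`. -/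
def Scheme.PointsOver {X : Scheme} {R : CommRingCat} (π : X ⟶ Spec R) {A : CommRingCat}
    (φ : R ⟶ A) : Type _ :=
  { s : Spec A ⟶ X // s ≫ π = Spec.map φ }

/-- The action of an endomorphism `f : X ⟶ X` over `Spec R` on points. -/
def actPt {X : Scheme} {R A : CommRingCat} {π : X ⟶ Spec R} {φ : R ⟶ A}
    (f : X ⟶ X) (hf : f ≫ π = π) :
    Scheme.PointsOver π φ → Scheme.PointsOver π φ :=
  fun s => ⟨s.1 ≫ f, by rw [Category.assoc, hf, s.2]⟩

/-- The set of `f`-periods of points of `S`. -/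
def PerSet {S : Type*} (f : S → S) : Set ℕ :=
  {n | 0 < n ∧ ∃ P : S, Function.minimalPeriod f P = n}

/-- The prime-to-`p` part of the set of `f`-periods. -/
def PerSetP (p : ℕ) {S : Type*} (f : S → S) : Set ℕ :=
  {n | n ∈ PerSet f ∧ n.Coprime p}

/-- An algebraic extension `K/F` is totally ramified at a prime `𝔭` of the subring `R` of `F`
if for every finite subextension `L` the ideal `𝔭` generates the `[L:F]`-th power of a single
maximal ideal of the integral closure of `R` in `L`. -/
def IsTotallyRamifiedAtAlgExt (R F K : Type*) [CommRing R] [Field F] [Field K]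
    [Algebra R F] [Algebra F K] (𝔭 : Ideal R) : Prop :=
  ∀ (L : IntermediateField F K), FiniteDimensional F L →
    ∀ [Algebra R L] [IsScalarTower R F L],
    ∃ P : Ideal (integralClosure R L), P.IsMaximal ∧
      𝔭.map (algebraMap R (integralClosure R L)) = P ^ Module.finrank F L

section HelperLemmas
open IsLocalRing

lemma aux_trivial {S : Type*} [CommRing S] [IsLocalRing S] [IsNoetherianRing S] (p n : ℕ)
    (hp : (p : S) ∈ maximalIdeal S) (hn : n.Coprime p) (h : RingAut S) (hh : h ^ n = 1)
    (h2 : ∀ s, h s - s ∈ maximalIdeal S ^ 2) : h = 1 := by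
  set m := maximalIdeal S with hm
  have hmap : ∀ j, ∀ s ∈ m ^ j, h s ∈ m ^ j := by
    intro j s hs
    have : (m ^ j).map (h : S →+* S) ≤ m ^ j := by
      rw [Ideal.map_pow]
      refine Ideal.pow_right_mono ?_ j
      rw [Ideal.map_le_iff_le_comap]
      intro x hx
      have := h2 x
      have h3 := Ideal.pow_le_self (two_ne_zero) this
      simpa using m.add_mem h3 hx
    exact this (Ideal.mem_map_of_mem _ hs)
  -- δ (m^j) ⊆ m^(j+1)
  have hδ : ∀ j, ∀ s ∈ m ^ j, h s - s ∈ m ^ (j + 1) := by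
    intro j
    induction j with
    | zero => intro s _; simpa using Ideal.pow_le_self two_ne_zero (h2 s)
    | succ j ih =>
      intro s hs
      rw [pow_succ] at hs
      refine Submodule.mul_induction_on hs ?_ ?_
      · intro a ha b hb
        have e : h (a * b) - a * b = (h a - a) * h b + a * (h b - b) := by
          rw [map_mul]; ring
        rw [e]
        refine Ideal.add_mem _ ?_ ?_
        · rw [pow_succ]
          exact Ideal.mul_mem_mul (ih a ha) (by simpa using hmap 1 b (by simpa using hb))
        · have := Ideal.mul_mem_mul ha (h2 b)
          rwa [← pow_add] at this
      · intro x y hx hy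
        rw [map_add]
        convert Ideal.add_mem _ hx hy using 1
        ring
  have hit : ∀ j i, ∀ s ∈ m ^ j, (h ^ i) s - s ∈ m ^ (j + 1) := by
    intro j i
    induction i with
    | zero => intro s _; simp
    | succ i ih =>
      intro s hs
      rw [pow_succ h i, RingAut.mul_apply]
      have h1 := ih (h s) (hmap j s hs)
      have h2 := hδ j s hs
      convert Ideal.add_mem _ h1 h2 using 1
      ring
  have key : ∀ j, ∀ s, h s - s ∈ m ^ j := by
    intro j
    induction j with
    | zero => simp
    | succ j ih =>
      intro s
      have hi : ∀ i : ℕ, (h ^ i) s - s - i * (h s - s) ∈ m ^ (j + 1) := by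
        intro i
        induction i with
        | zero => simp
        | succ i ihi =>
          have e : (h ^ (i + 1)) s = (h ^ i) s + (h ^ i) (h s - s) := by
            rw [pow_succ, RingAut.mul_apply, ← map_add]; congr 1; ring
          rw [e]
          convert Ideal.add_mem _ ihi (hit j i _ (ih s)) using 1
          push_cast; ring
      have h1 := hi n
      rw [hh] at h1
      simp only [RingAut.one_apply, sub_self, zero_sub, neg_mem_iff] at h1
      have h3 : (p : S) * (h s - s) ∈ m ^ (j + 1) := by
        rw [pow_succ']; exact Ideal.mul_mem_mul hp (ih s)
      have hb : (1 : ℤ) = n * n.gcdA p + p * n.gcdB p := by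
        rw [← Nat.gcd_eq_gcd_ab, hn.gcd_eq_one]; simp
      have hb' : (1 : S) = n * (n.gcdA p : ℤ) + p * (n.gcdB p : ℤ) := by
        exact_mod_cast congrArg (Int.cast : ℤ → S) hb
      have : h s - s = (n.gcdA p : S) * (n * (h s - s)) + (n.gcdB p : S) * (p * (h s - s)) := by
        linear_combination (h s - s) * hb'
      rw [this]
      exact Ideal.add_mem _ (Ideal.mul_mem_left _ _ h1) (Ideal.mul_mem_left _ _ h3)
  ext s
  have : h s - s ∈ (⨅ i : ℕ, m ^ i) := by
    rw [Ideal.mem_iInf]; exact fun i => key i s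
  rw [Ideal.iInf_pow_eq_bot_of_isLocalRing m (Ideal.IsPrime.ne_top inferInstance)] at this
  simpa [sub_eq_zero] using this

lemma aux_order {S : Type*} [CommRing S] [IsLocalRing S] [IsNoetherianRing S] (p n N : ℕ)
    (hp : (p : S) ∈ maximalIdeal S) (hn : n.Coprime p) (h : RingAut S) (hh : h ^ n = 1)
    [Finite (S ⧸ maximalIdeal S ^ 2)]
    (hN : (Nat.card (S ⧸ maximalIdeal S ^ 2)).factorial ∣ N) : h ^ N = 1 := by
  refine aux_trivial p n hp hn _ (by rw [← pow_mul, mul_comm, pow_mul, hh, one_pow]) ?_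
  set m := maximalIdeal S with hm
  have hmap : ∀ g : RingAut S, m ^ 2 = (m ^ 2).map (g : S →+* S) := by
    intro g
    rw [Ideal.map_pow]
    congr 1
    refine le_antisymm ?_ (IsLocalRing.map_maximalIdeal_le (g : S →+* S))
    intro x hx
    have : g.symm x ∈ m := map_nonunit (g.symm : S →+* S) x hx
    simpa using Ideal.mem_map_of_mem (g : S →+* S) this
  let e : (S ⧸ m ^ 2) ≃+* (S ⧸ m ^ 2) := Ideal.quotientEquiv _ _ h (hmap h)
  have he : ∀ i s, ((e.toEquiv : Equiv.Perm _) ^ i) (Ideal.Quotient.mk _ s) = Ideal.Quotient.mk _ ((h ^ i) s) := by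
    intro i
    induction i with
    | zero => simp
    | succ i ih => intro s; rw [pow_succ h i, pow_succ (e.toEquiv : Equiv.Perm _) i, Equiv.Perm.mul_apply, RingAut.mul_apply, ← ih]; rfl
  have h1 : (e.toEquiv : Equiv.Perm _) ^ N = 1 := by
    obtain ⟨k, rfl⟩ := hN
    rw [pow_mul, ← Nat.card_perm, pow_card_eq_one', one_pow]
  intro s
  rw [← Ideal.Quotient.eq, ← he, h1]; rfl

lemma aux_period {R A : Type*} [CommRing R] [CommRing A] [Nontrivial A]
    [IsLocalRing R] [IsNoetherianRing R] (p n N : ℕ) (hn0 : 0 < n)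
    (hp : (p : R) ∈ maximalIdeal R) (hn : n.Coprime p) (φ : R →+* R) (ψ : R →+* A)
    (hh : ψ.comp (φ ^ n) = ψ)
    [Finite (R ⧸ maximalIdeal R ^ 2)]
    (hN : ∀ i ≤ (Nat.card (R ⧸ maximalIdeal R ^ 2)), i.factorial ∣ N) : ψ.comp (φ ^ N) = ψ := by
  let I : Ideal R := ⨅ i : ℕ, RingHom.ker (ψ.comp (φ ^ i))
  have hI : ∀ a, a ∈ I ↔ ∀ i, ψ ((φ ^ i) a) = 0 := by
    intro a; simp [I, RingHom.mem_ker]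
  have hIt : I ≠ ⊤ := by
    rw [Ne, Ideal.eq_top_iff_one, hI]; intro h; simpa using h 0
  have hhk : ∀ i a, ψ ((φ ^ (n + i)) a) = ψ ((φ ^ i) a) := by
    intro i a
    rw [pow_add]
    exact congr($hh ((φ ^ i) a))
  have hφI : I ≤ I.comap φ := by
    intro a ha
    rw [Ideal.mem_comap, hI]
    intro i
    exact (by rw [pow_succ]; rfl : (φ ^ i) (φ a) = (φ ^ (i+1)) a) ▸ (hI a).1 ha (i+1)
  let S := R ⧸ I
  have : Nontrivial S := Ideal.Quotient.nontrivial_iff.2 hIt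
  have : IsLocalRing S := .of_surjective' (Ideal.Quotient.mk I) Ideal.Quotient.mk_surjective
  let f : S →+* S := Ideal.quotientMap I φ hφI
  have hf : ∀ i a, (f ^ i) (Ideal.Quotient.mk I a) = Ideal.Quotient.mk I ((φ ^ i) a) := by
    intro i
    induction i with
    | zero => simp
    | succ i ih =>
      intro a; rw [pow_succ, pow_succ, RingHom.mul_def, RingHom.mul_def, RingHom.comp_apply, RingHom.comp_apply, ← ih]
      rfl
  have hfn : f ^ n = 1 := by
    refine RingHom.ext fun a => ?_
    obtain ⟨a, rfl⟩ := Ideal.Quotient.mk_surjective a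
    rw [hf]
    refine Ideal.Quotient.eq.2 ((hI _).2 fun i => ?_)
    rw [map_sub, map_sub, sub_eq_zero, ← hhk i a, add_comm, pow_add]; rfl
  have hfn' : f * f ^ (n - 1) = 1 := by rw [← pow_succ', Nat.sub_add_cancel hn0, hfn]
  have hfn'' : f ^ (n - 1) * f = 1 := by rw [← pow_succ, Nat.sub_add_cancel hn0, hfn]
  let h : RingAut S := RingEquiv.ofRingHom f (f ^ (n - 1)) hfn' hfn''
  have hfi : ∀ i s, (h ^ i) s = (f ^ i) s := by
    intro i
    induction i with
    | zero => simp
    | succ i ih => intro s; rw [pow_succ, pow_succ, RingAut.mul_apply, ih]; rfl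
  have hloc : IsLocalHom (Ideal.Quotient.mk I) := .of_surjective _ Ideal.Quotient.mk_surjective
  have hpS : (p : S) ∈ maximalIdeal S := by
    have := map_nonunit (Ideal.Quotient.mk I) _ hp
    simpa using this
  let q : (R ⧸ maximalIdeal R ^ 2) →+* (S ⧸ maximalIdeal S ^ 2) :=
    Ideal.quotientMap _ (Ideal.Quotient.mk I) (by
      rw [← Ideal.map_le_iff_le_comap, Ideal.map_pow]
      refine Ideal.pow_right_mono ?_ 2
      rw [Ideal.map_le_iff_le_comap]
      exact fun x hx => map_nonunit (Ideal.Quotient.mk I) _ hx)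
  have hq : Function.Surjective q := Ideal.quotientMap_surjective Ideal.Quotient.mk_surjective
  have : Finite (S ⧸ maximalIdeal S ^ 2) := .of_surjective q hq
  have hN' := aux_order p n N hpS hn h
    (by ext s; rw [hfi, hfn]; rfl) (hN _ (Nat.card_le_card_of_surjective q hq))
  ext a
  have : Ideal.Quotient.mk I ((φ ^ N) a) = Ideal.Quotient.mk I a := by
    rw [← hf, ← hfi, hN']; rfl
  have := (hI _).1 (Ideal.Quotient.eq.1 this) 0
  simpa [sub_eq_zero] using this

lemma aux_residue (R S F L : Type*) [CommRing R] [CommRing S] [Field F] [Field L]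
    [IsDedekindDomain R] [IsDedekindDomain S] [Algebra R F] [IsFractionRing R F]
    [Algebra S L] [IsFractionRing S L] [Algebra R S] [Algebra R L] [Algebra F L]
    [IsScalarTower R S L] [IsScalarTower R F L] [Module.Finite R S] [FiniteDimensional F L]
    (𝔭 : Ideal R) [h𝔭 : 𝔭.IsMaximal] (h0 : 𝔭 ≠ ⊥) [Finite (R ⧸ 𝔭)] (P : Ideal S) [hP : P.IsMaximal]
    (h : 𝔭.map (algebraMap R S) = P ^ Module.finrank F L) (s : S) :
    ∃ r : R, s - algebraMap R S r ∈ P := by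
  have h1 := Ideal.finrank_quotient_map (S := S) 𝔭 F L
  let := Ideal.Quotient.field 𝔭
  have hn0 : Module.finrank F L ≠ 0 := Module.finrank_pos.ne'
  have hfin : Module.Finite (R ⧸ 𝔭) (S ⧸ 𝔭.map (algebraMap R S)) :=
    Module.finite_of_finrank_pos (by rw [h1]; exact Module.finrank_pos)
  have hcard := Module.natCard_eq_pow_finrank (K := R ⧸ 𝔭) (V := S ⧸ 𝔭.map (algebraMap R S))
  have hinj : Function.Injective (algebraMap R S) :=
    have := FaithfulSMul.of_field_isFractionRing R S F L
    FaithfulSMul.algebraMap_injective R S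
  have hPb : P ≠ ⊥ := by
    rintro rfl
    rw [← Ideal.zero_eq_bot, zero_pow hn0, Ideal.zero_eq_bot, Ideal.map_eq_bot_iff_of_injective hinj] at h
    exact h0 h
  have h2 := cardQuot_pow_of_prime (P := P) (i := Module.finrank F L) hPb
  rw [h1, h] at hcard
  change Nat.card (S ⧸ P ^ Module.finrank F L) = Nat.card (S ⧸ P) ^ _ at h2
  rw [h2] at hcard
  have h3 : Nat.card (S ⧸ P) = Nat.card (R ⧸ 𝔭) := Nat.pow_left_injective hn0 hcard
  have hle : 𝔭 ≤ P.comap (algebraMap R S) := by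
    rw [← Ideal.map_le_iff_le_comap, h]; exact Ideal.pow_le_self hn0
  let q : R ⧸ 𝔭 →+* S ⧸ P := Ideal.quotientMap P (algebraMap R S) hle
  have : Nontrivial (S ⧸ P) := Ideal.Quotient.nontrivial_iff.2 hP.ne_top
  have : Finite (S ⧸ P) := Nat.finite_of_card_ne_zero (by rw [h3]; exact Nat.card_pos.ne')
  have hq : Function.Bijective q :=
    (Nat.bijective_iff_injective_and_card q).2 ⟨q.injective, h3.symm⟩
  obtain ⟨x, hx⟩ := hq.2 (Ideal.Quotient.mk P s)
  obtain ⟨r, rfl⟩ := Ideal.Quotient.mk_surjective x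
  exact ⟨r, Ideal.Quotient.eq.1 hx.symm⟩

lemma aux_dvd (S : Type*) [CommRing S] [IsDedekindDomain S] (P : Ideal S) [P.IsPrime]
    (hP : P ≠ ⊥) (u v : S) : ∃ b c : S, c ∉ P ∧ (c * u = v * b ∨ c * v = u * b) := by
  have hdvr := IsLocalization.AtPrime.isDiscreteValuationRing_of_dedekind_domain S hP
    (Localization.AtPrime P)
  have hinj : Function.Injective (algebraMap S (Localization.AtPrime P)) :=
    IsLocalization.injective _ P.primeCompl_le_nonZeroDivisors
  have key : ∀ u v : S, algebraMap S (Localization.AtPrime P) u ∣ algebraMap S _ v →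
      ∃ b c : S, c ∉ P ∧ c * v = u * b := by
    rintro u v ⟨w, hw⟩
    obtain ⟨⟨b, c⟩, hbc⟩ := IsLocalization.surj P.primeCompl w
    refine ⟨b, c, c.2, hinj ?_⟩
    rw [map_mul, map_mul, hw, ← hbc]
    ring
  rcases ValuationRing.dvd_total (algebraMap S (Localization.AtPrime P) u) (algebraMap S _ v)
    with h | h
  · obtain ⟨b, c, hc, h⟩ := key _ _ h
    exact ⟨b, c, hc, Or.inr h⟩
  · obtain ⟨b, c, hc, h⟩ := key _ _ h
    exact ⟨b, c, hc, Or.inl h⟩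

/-- A valuation ring with residue field `O/𝔭`. -/
lemma aux_valuation (F : Type) [Field F] [NumberField F]
    (𝔭 : Ideal (𝓞 F)) (h𝔭 : 𝔭.IsMaximal) (h0 : 𝔭 ≠ ⊥)
    (K : Type) [Field K] [Algebra F K] [Algebra.IsAlgebraic F K]
    (hKram : IsTotallyRamifiedAtAlgExt (𝓞 F) F K 𝔭)
    [Algebra (𝓞 F) K] [IsScalarTower (𝓞 F) F K] :
    ∃ (A : ValuationSubring K) (i : 𝓞 F →+* A) (ρ : A →+* 𝓞 F ⧸ 𝔭), 
      (algebraMap A K).comp i = algebraMap (𝓞 F) K ∧ ρ.comp i = Ideal.Quotient.mk 𝔭 ∧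
      IsLocalHom ρ := by
  have hinjK : Function.Injective (algebraMap (𝓞 F) K) := by
    rw [IsScalarTower.algebraMap_eq (𝓞 F) F K]
    exact (algebraMap F K).injective.comp (FaithfulSMul.algebraMap_injective _ _)
  have hfin : Finite (𝓞 F ⧸ 𝔭) := Ideal.finiteQuotientOfFreeOfNeBot 𝔭 h0
  let j : Localization.AtPrime 𝔭 →+* K := IsLocalization.lift (M := 𝔭.primeCompl) (g := algebraMap (𝓞 F) K) (by
    rintro ⟨y, hy⟩
    refine IsUnit.mk0 _ ?_
    intro h
    rw [map_eq_zero_iff _ hinjK] at h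
    exact hy ((show y = 0 from h) ▸ 𝔭.zero_mem))
  obtain ⟨A, hA, hloc⟩ := IsLocalRing.exists_factor_valuationRing j
  have hj : ∀ a : 𝓞 F, j (algebraMap _ _ a) = algebraMap (𝓞 F) K a := fun a => IsLocalization.lift_eq _ _
  have hOA : ∀ a : 𝓞 F, algebraMap (𝓞 F) K a ∈ A := fun a => hj a ▸ hA _
  let i : 𝓞 F →+* A := (algebraMap (𝓞 F) K).codRestrict A.toSubring hOA
  have hi : ∀ a, ((i a : A) : K) = algebraMap (𝓞 F) K a := fun a => rfl
  have hi𝔭 : ∀ a : 𝓞 F, i a ∈ maximalIdeal A ↔ a ∈ 𝔭 := by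
    intro a
    have : i a = j.codRestrict A.toSubring hA (algebraMap _ _ a) := Subtype.ext (hj a).symm
    rw [this, ← not_iff_not, IsLocalRing.mem_maximalIdeal, mem_nonunits_iff, not_not]
    rw [isUnit_map_iff, IsLocalization.AtPrime.isUnit_to_map_iff _ 𝔭]
    rfl
  have hsurj : ∀ a : A, ∃ r : 𝓞 F, a - i r ∈ maximalIdeal A := by
    rintro ⟨a, ha⟩
    let L : IntermediateField F K := IntermediateField.adjoin F {a}
    have hLf : FiniteDimensional F L := IntermediateField.adjoin.finiteDimensional
      (Algebra.IsIntegral.isIntegral a)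
    let a' : L := ⟨a, IntermediateField.mem_adjoin_simple_self F a⟩
    let : Algebra (𝓞 F) L := ((algebraMap F L).comp (algebraMap (𝓞 F) F)).toAlgebra
    have : IsScalarTower (𝓞 F) F L := .of_algebraMap_eq fun _ => rfl
    have hLK : (algebraMap L K).comp (algebraMap (𝓞 F) L) = algebraMap (𝓞 F) K := by
      rw [IsScalarTower.algebraMap_eq (𝓞 F) F K]; rfl
    obtain ⟨P, hP, hPe⟩ := hKram L hLf
    let S := integralClosure (𝓞 F) L
    have : IsDedekindDomain S := integralClosure.isDedekindDomain (𝓞 F) F L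
    have : Module.Finite (𝓞 F) S := IsIntegralClosure.finite (𝓞 F) F L S
    have : IsFractionRing S L := integralClosure.isFractionRing_of_finite_extension F L
    have hSA : ∀ s : S, ((s : L) : K) ∈ A := by
      intro s
      have h1 : IsIntegral (𝓞 F) (s : L) := s.2
      have h2 : IsIntegral A ((s : L) : K) := by
        obtain ⟨f, hf, hf0⟩ := h1
        refine ⟨f.map i, hf.map i, ?_⟩
        rw [Polynomial.eval₂_map]
        have := congrArg (algebraMap L K) hf0
        rw [Polynomial.hom_eval₂, map_zero, hLK] at this
        exact this
      obtain ⟨y, hy⟩ := IsIntegrallyClosed.isIntegral_iff.1 h2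
      exact hy ▸ y.2
    let σ : S →+* A := (((algebraMap L K).comp (algebraMap S L))).codRestrict A.toSubring hSA
    have hσ : ∀ s, ((σ s : A) : K) = ((s : L) : K) := fun _ => rfl
    have hσi : ∀ r, σ (algebraMap _ _ r) = i r := fun r => Subtype.ext congr($hLK r)
    have hσP : ∀ s, σ s ∈ maximalIdeal A ↔ s ∈ P := by
      intro s
      have hle : P ≤ (maximalIdeal A).comap σ := by
        refine Ideal.IsPrime.le_of_pow_le (n := Module.finrank F L) ?_
        rw [← hPe, Ideal.map_le_iff_le_comap]
        intro r hr
        rw [Ideal.mem_comap, Ideal.mem_comap, hσi, hi𝔭]; exact hr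
      have := hP.eq_of_le (Ideal.IsPrime.ne_top inferInstance) hle
      rw [this]; rfl
    have hPb : P ≠ ⊥ := by
      rintro rfl
      have hinjS : Function.Injective (algebraMap (𝓞 F) S) := by
        intro x y hxy
        refine hinjK ?_
        rw [← hi, ← hi, ← hσi, ← hσi, hxy]
      rw [← Ideal.zero_eq_bot, zero_pow Module.finrank_pos.ne', Ideal.zero_eq_bot, Ideal.map_eq_bot_iff_of_injective hinjS] at hPe
      exact h0 hPe
    -- fraction
    have hfrac : ∃ b c : S, c ∉ P ∧ (a' : L) * c = b := by
      obtain ⟨u, v, hv, huv⟩ := IsFractionRing.div_surjective (A := S) a'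
      have hv0 : algebraMap S L v ≠ 0 :=
        IsLocalization.to_map_ne_zero_of_mem_nonZeroDivisors L le_rfl hv
      rw [div_eq_iff hv0] at huv
      by_cases hu : algebraMap S L u = 0
      · refine ⟨0, 1, ?_, ?_⟩
        · exact fun h => hP.ne_top ((Ideal.eq_top_iff_one _).2 h)
        · rw [hu] at huv
          have := (mul_eq_zero.1 huv.symm).resolve_right hv0
          rw [this]; simp
      obtain ⟨b, c, hc, h | h⟩ := aux_dvd S P hPb u v
      · refine ⟨b, c, hc, ?_⟩
        have := congrArg (algebraMap S L) h
        rw [map_mul, map_mul, huv] at this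
        refine mul_right_cancel₀ hv0 ?_
        change a' * algebraMap S L c * _ = algebraMap S L b * _
        linear_combination this
      · have := congrArg (algebraMap S L) h
        rw [map_mul, map_mul, huv] at this
        have h2 : a' * algebraMap S L b = algebraMap S L c := by
          refine mul_right_cancel₀ hv0 ?_
          linear_combination -this
        refine ⟨c, b, ?_, h2⟩
        rw [← hσP]
        intro hb
        refine hc ((hσP c).1 ?_)
        have : σ c = ⟨a, ha⟩ * σ b := Subtype.ext congr(algebraMap L K $h2.symm)
        rw [this]
        exact Ideal.mul_mem_left _ _ hb
    obtain ⟨b, c, hc, hbc⟩ := hfrac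
    have hbc' : ⟨a, ha⟩ * σ c = σ b := Subtype.ext congr(algebraMap L K $hbc)
    obtain ⟨d, w, hw, hdw⟩ := hP.exists_inv hc
    obtain ⟨r, hr⟩ := aux_residue (𝓞 F) S F L 𝔭 h0 P hPe (b * d)
    refine ⟨r, ?_⟩
    rw [← hσP, map_sub, hσi, map_mul] at hr
    have h1 : σ d * σ c + σ w = 1 := by rw [← map_mul, ← map_add, hdw, map_one]
    have : (⟨a, ha⟩ : A) - i r = (σ b * σ d - i r) + ⟨a, ha⟩ * σ w := by
      linear_combination (-⟨a, ha⟩ : A) * h1 + σ d * hbc'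
    rw [this]
    exact Ideal.add_mem _ hr (Ideal.mul_mem_left _ _ ((hσP w).2 hw))
  have hker : RingHom.ker ((IsLocalRing.residue A).comp i) = 𝔭 := by
    ext x
    rw [RingHom.mem_ker, RingHom.comp_apply, IsLocalRing.residue_eq_zero_iff, hi𝔭]
  have hsj : Function.Surjective ((IsLocalRing.residue A).comp i) := by
    intro y
    obtain ⟨a, rfl⟩ := IsLocalRing.residue_surjective y
    obtain ⟨r, hr⟩ := hsurj a
    refine ⟨r, ?_⟩
    rw [← IsLocalRing.residue_eq_zero_iff, map_sub, sub_eq_zero] at hr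
    exact hr.symm
  let e : 𝓞 F ⧸ 𝔭 ≃+* ResidueField A :=
    (Ideal.quotEquivOfEq hker.symm).trans (RingHom.quotientKerEquivOfSurjective hsj)
  refine ⟨A, i, (e.symm : ResidueField A →+* 𝓞 F ⧸ 𝔭).comp (IsLocalRing.residue A), rfl, ?_, ?_⟩
  · ext x
    simp only [RingHom.comp_apply]
    exact (e.symm_apply_eq).2 rfl
  · infer_instance

end HelperLemmas

lemma aux_finite_homs {R B k : CommRingCat} [Finite k] (ι : R ⟶ B) (hι : ι.hom.FiniteType)
    (c : R ⟶ k) : Finite {ψ : B ⟶ k // ι ≫ ψ = c} := by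
  algebraize [ι.hom, c.hom]
  obtain ⟨s, hs⟩ := (inferInstance : Algebra.FiniteType R B).out
  refine Finite.of_injective (β := s → k) (fun ψ x => ψ.1.hom x) ?_
  rintro ⟨ψ, hψ⟩ ⟨ψ', hψ'⟩ h
  let α : B →ₐ[R] k := { ψ.hom with commutes' := fun r => congr(($hψ).hom r) }
  let α' : B →ₐ[R] k := { ψ'.hom with commutes' := fun r => congr(($hψ').hom r) }
  have : α = α' := AlgHom.ext_of_adjoin_eq_top hs fun x hx => congrFun h ⟨x, hx⟩
  ext x
  exact congr($this x)

lemma aux_finite_affine {R B k : CommRingCat.{0}} [Finite k] (q : Spec B ⟶ Spec R)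
    [hq : LocallyOfFiniteType q] (c : R ⟶ k) : Finite {u : Spec k ⟶ Spec B // u ≫ q = Spec.map c} := by
  obtain ⟨ι, rfl⟩ := Spec.map_surjective q
  have hι := (HasRingHomProperty.Spec_iff (P := @LocallyOfFiniteType)).1 hq
  have := aux_finite_homs ι hι c
  refine Finite.of_injective (β := {ψ : B ⟶ k // ι ≫ ψ = c})
    (fun u => ⟨Spec.preimage u.1, Spec.map_injective (by simpa using u.2)⟩) ?_
  intro u v h
  exact Subtype.ext (Spec.map_preimage u.1 ▸ Spec.map_preimage v.1 ▸
    congrArg (fun z => Spec.map z.1) h)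

lemma aux_finite_points {X : Scheme.{0}} {R k : CommRingCat.{0}} (π : X ⟶ Spec R)
    [LocallyOfFiniteType π] [QuasiCompact π] [Finite k] (hk : IsField k) (c : R ⟶ k) :
    Finite (Scheme.PointsOver π c) := by
  have : CompactSpace X := QuasiCompact.compactSpace_of_compactSpace π
  let := hk.toField
  let 𝒰 := X.affineCover.finiteSubcover
  have hfin : ∀ i : 𝒰.I₀, Finite {u : Spec k ⟶ 𝒰.X i // u ≫ 𝒰.f i ≫ π = Spec.map c} :=
    fun i =>
      have hq : LocallyOfFiniteType (𝒰.f i ≫ π) := inferInstance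
      aux_finite_affine (hq := hq) (𝒰.f i ≫ π) c
  refine Finite.of_surjective
    (α := Σ i : 𝒰.I₀, {u : Spec k ⟶ 𝒰.X i // u ≫ 𝒰.f i ≫ π = Spec.map c})
    (fun u => ⟨u.2.1 ≫ 𝒰.f u.1, by simpa using u.2.2⟩) ?_
  rintro ⟨t, ht⟩
  obtain ⟨i, y, hy⟩ := 𝒰.exists_eq (t (IsLocalRing.closedPoint k))
  have hrange : Set.range t ⊆ Set.range (𝒰.f i) := by
    rintro _ ⟨z, rfl⟩
    have : z = IsLocalRing.closedPoint k :=
      Subsingleton.elim (α := PrimeSpectrum k) _ _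
    exact ⟨y, by rw [hy, this]⟩
  have hl := IsOpenImmersion.lift_fac (𝒰.f i) t hrange
  refine ⟨⟨i, IsOpenImmersion.lift (𝒰.f i) t hrange, ?_⟩, Subtype.ext hl⟩
  rw [← Category.assoc, hl, ht]

/-- The endomorphism of the stalk at a fixed point. -/
lemma aux_stalk {X : Scheme.{0}} (g : X ⟶ X) (x : X) (hx : g x = x) :
    ∃ φ : X.presheaf.stalk x ⟶ X.presheaf.stalk x,
      Spec.map φ ≫ X.fromSpecStalk x = X.fromSpecStalk x ≫ g := by
  refine ⟨X.presheaf.stalkSpecializes (specializes_of_eq hx) ≫ g.stalkMap x, ?_⟩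
  rw [Spec.map_comp, Category.assoc, Scheme.SpecMap_stalkSpecializes_fromSpecStalk,
    Scheme.SpecMap_stalkMap_fromSpecStalk]

lemma actPt_iterate {X : Scheme} {R : CommRingCat} {π : X ⟶ Spec R}
    (f : X ⟶ X) (hf : f ≫ π = π) (r : ℕ) : ∃ (g : X ⟶ X) (hg : g ≫ π = π),
    (∀ {B : CommRingCat} (c : R ⟶ B), (actPt (φ := c) f hf)^[r] = actPt (φ := c) g hg) := by
  induction r with
  | zero =>
    refine ⟨𝟙 X, by simp, fun c => ?_⟩
    funext s
    exact Subtype.ext (by simp [actPt])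
  | succ r ih =>
    obtain ⟨g, hg, h⟩ := ih
    refine ⟨f ≫ g, by rw [Category.assoc, hg, hf], fun c => ?_⟩
    funext s
    rw [iterate_succ_apply, h]
    exact Subtype.ext (by simp [actPt])

/-- the key local bound -/
lemma aux_local {X : Scheme.{0}} {R : CommRingCat.{0}} (π : X ⟶ Spec R) [IsLocallyNoetherian X]
    (A K k : CommRingCat.{0}) [IsLocalRing A] [Nontrivial K] (hk : IsField k) [Finite k]
    (c : R ⟶ K) (a : A ⟶ K) (ρ : A ⟶ k) [IsLocalHom ρ.hom]
    (p : ℕ) (hp : (p : k) = 0) (t : Spec k ⟶ X) :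
    ∃ N : ℕ, 0 < N ∧ ∀ (g : X ⟶ X) (hg : g ≫ π = π) (s : Spec A ⟶ X) (P : Scheme.PointsOver π c),
      Spec.map ρ ≫ s = t → t ≫ g = t → P.1 = Spec.map a ≫ s →
      0 < minimalPeriod (actPt g hg) P → (minimalPeriod (actPt g hg) P).Coprime p → 
      minimalPeriod (actPt g hg) P ∣ N := by
  let := hk.toField
  let x : X := t (IsLocalRing.closedPoint k)
  let St := X.presheaf.stalk x
  let τ : St ⟶ k := Scheme.stalkClosedPointTo t
  have hτ : IsLocalHom τ.hom := inferInstance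
  have : IsNoetherianRing St := inferInstance
  have hmem : ∀ y, τ.hom y = 0 → y ∈ IsLocalRing.maximalIdeal St := by
    intro y hy hu
    have := hu.map τ.hom
    rw [hy] at this
    exact not_isUnit_zero this
  have hmem' : ∀ y ∈ IsLocalRing.maximalIdeal St, τ.hom y = 0 := by
    intro y hy
    by_contra h
    exact hy (hτ.map_nonunit y (IsUnit.mk0 _ h))
  have hker : IsLocalRing.maximalIdeal St = RingHom.ker τ.hom := by
    ext y; exact ⟨hmem' y, hmem y⟩
  have : Finite (St ⧸ IsLocalRing.maximalIdeal St) := by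
    rw [hker]
    exact Finite.of_injective _ (RingHom.kerLift_injective τ.hom)
  have : Finite (St ⧸ IsLocalRing.maximalIdeal St ^ 2) :=
    Ideal.finite_quotient_pow (IsNoetherian.noetherian _) 2
  refine ⟨(Nat.card (St ⧸ IsLocalRing.maximalIdeal St ^ 2)).factorial, Nat.factorial_pos _, ?_⟩
  intro g hg s P hst htg hPs hpos hcop
  have hgx : g x = x := by
    conv_rhs => rw [show x = (t ≫ g) (IsLocalRing.closedPoint k) by rw [htg]]
    rfl
  have hsx : s (IsLocalRing.closedPoint A) = x := by
    have : Spec.map ρ (IsLocalRing.closedPoint k) = IsLocalRing.closedPoint A :=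
      IsLocalRing.comap_closedPoint ρ.hom
    rw [← this]
    simp only [x, ← hst]
    rfl
  obtain ⟨φ, hφ⟩ := aux_stalk g x hgx
  obtain ⟨ψ, hψ⟩ : ∃ ψ : St ⟶ K, Spec.map ψ ≫ X.fromSpecStalk x = P.1 := by
    refine ⟨X.presheaf.stalkSpecializes (specializes_of_eq hsx) ≫ Scheme.stalkClosedPointTo s ≫ a, ?_⟩
    rw [Spec.map_comp, Spec.map_comp, Category.assoc, Category.assoc,
      Scheme.SpecMap_stalkSpecializes_fromSpecStalk, Scheme.Spec_stalkClosedPointTo_fromSpecStalk, hPs]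
  have hit : ∀ i, ((actPt g hg)^[i] P).1 = Spec.map (CommRingCat.ofHom (ψ.hom.comp (φ.hom ^ i))) ≫ X.fromSpecStalk x := by
    intro i
    induction i with
    | zero => exact hψ.symm
    | succ i ih =>
      rw [iterate_succ_apply']
      change ((actPt g hg)^[i] P).1 ≫ g = _
      rw [ih, Category.assoc, ← hφ, ← Category.assoc, ← Spec.map_comp]
      congr 2
  have hper : ∀ i, IsPeriodicPt (actPt g hg) i P ↔ ψ.hom.comp (φ.hom ^ i) = ψ.hom := by
    intro i
    have e : IsPeriodicPt (actPt g hg) i P ↔ ((actPt g hg)^[i] P).1 = P.1 :=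
      ⟨fun h => congrArg Subtype.val h, fun h => Subtype.ext h⟩
    rw [e, hit, ← hψ, cancel_mono, Spec.map_inj]
    constructor
    · intro h; exact congr(($h).hom)
    · intro h; ext1; exact h
  refine IsPeriodicPt.minimalPeriod_dvd ((hper _).2 ?_)
  refine aux_period p _ _ hpos (hmem _ (by simp [hp])) hcop φ.hom ψ.hom
    ((hper _).1 (isPeriodicPt_minimalPeriod _ _)) fun i hi => Nat.factorial_dvd_factorial hi


/-- Let `O` be the ring of integers of a number field `F` and `K` an infinite
algebraic extension of `F` which is totally ramified at a prime `𝔭` of `F` dividing the rational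
prime `p`.  For every proper variety `X` over `Spec O` there is a constant `m > 0` such that for
every `O`-morphism `f : X ⟶ X` every element of `Per_(p)(X(K), f)` is at most `m`. -/
theorem stmt_3 (p : ℕ) [Fact p.Prime]
    (F : Type) [Field F] [NumberField F]
    -- `𝔭` a prime of `F` dividing `p`
    (𝔭 : Ideal (𝓞 F)) (h𝔭 : 𝔭.IsMaximal) (h𝔭p : (p : 𝓞 F) ∈ 𝔭)
    -- `K` an infinite algebraic extension of `F`, totally ramified at `𝔭`
    (K : Type) [Field K] [Algebra F K] [Algebra.IsAlgebraic F K]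
    (hKinf : ¬ FiniteDimensional F K)
    (hKram : IsTotallyRamifiedAtAlgExt (𝓞 F) F K 𝔭)
    [Algebra (𝓞 F) K] [IsScalarTower (𝓞 F) F K]
    -- `X` a proper variety over `Spec (𝓞 F)`
    (X : Scheme) (π : X ⟶ Spec (CommRingCat.of (𝓞 F))) [IsProper π] [IsIntegral X] :
    ∃ m : ℕ, 0 < m ∧
      ∀ (f : X ⟶ X) (hf : f ≫ π = π),
      ∀ n ∈ PerSetP p (actPt (φ := CommRingCat.ofHom (algebraMap (𝓞 F) K)) f hf), n ≤ m := by
  have hp0 : 𝔭 ≠ ⊥ := by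
    rintro rfl
    rw [Ideal.mem_bot, Nat.cast_eq_zero] at h𝔭p
    exact (Fact.out : p.Prime).ne_zero h𝔭p
  have hfin : Finite (𝓞 F ⧸ 𝔭) := Ideal.finiteQuotientOfFreeOfNeBot 𝔭 hp0
  obtain ⟨A, i, ρ, hiK, hρi, hρ⟩ := aux_valuation F 𝔭 h𝔭 hp0 K hKram
  let O := CommRingCat.of (𝓞 F)
  let k := CommRingCat.of (𝓞 F ⧸ 𝔭)
  have hk : IsField k := (Ideal.Quotient.maximal_ideal_iff_isField_quotient 𝔭).1 h𝔭
  have : Finite k := hfin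
  let ck : O ⟶ k := CommRingCat.ofHom (Ideal.Quotient.mk 𝔭)
  let cK : O ⟶ CommRingCat.of K := CommRingCat.ofHom (algebraMap (𝓞 F) K)
  let aK : CommRingCat.of A ⟶ CommRingCat.of K := CommRingCat.ofHom (algebraMap A K)
  let iA : O ⟶ CommRingCat.of A := CommRingCat.ofHom i
  let ρk : CommRingCat.of A ⟶ k := CommRingCat.ofHom ρ
  have hiaK : iA ≫ aK = cK := by ext1; exact hiK
  have hiρk : iA ≫ ρk = ck := by ext1; exact hρi
  have hT : Finite (Scheme.PointsOver π ck) := aux_finite_points π hk ck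
  have hXn : IsLocallyNoetherian X := by
    have : IsLocallyNoetherian (Spec (CommRingCat.of (𝓞 F))) :=
      isLocallyNoetherian_Spec.2 (inferInstanceAs (IsNoetherianRing (𝓞 F)))
    exact LocallyOfFiniteType.isLocallyNoetherian π
  have hpk : (p : k) = 0 := by
    have : Ideal.Quotient.mk 𝔭 (p : 𝓞 F) = 0 := Ideal.Quotient.eq_zero_iff_mem.2 h𝔭p
    rw [map_natCast] at this
    exact this
  have hval : ValuativeCriterion π := by
    have h := (inferInstance : IsProper π)
    rw [IsProper.eq_valuativeCriterion] at h
    exact h.1.1.1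
  have hρl : IsLocalHom ρk.hom := hρ
  have hlocal := fun t : Scheme.PointsOver π ck =>
    aux_local π (CommRingCat.of A) (CommRingCat.of K) k hk cK aK ρk p hpk t.1
  choose N hN0 hN using hlocal
  have := Fintype.ofFinite (Scheme.PointsOver π ck)
  refine ⟨1 + Nat.card (Scheme.PointsOver π ck) * ∑ t, N t, by omega, ?_⟩
  rintro f hf n ⟨⟨hn0, P, hPn⟩, hcop⟩
  -- lift the point
  have hcomm : P.1 ≫ π = Spec.map aK ≫ Spec.map iA := by
    rw [← Spec.map_comp, hiaK]; exact P.2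
  let Sq : ValuativeCommSq π := { R := A, K := K, i₁ := P.1, i₂ := Spec.map iA, commSq := ⟨hcomm⟩ }
  obtain ⟨s, hs1, hs2⟩ := (hval.existence Sq).exists_lift
  change Spec.map aK ≫ s = P.1 at hs1
  change s ≫ π = Spec.map iA at hs2
  let sA : Scheme.PointsOver π iA := ⟨s, hs2⟩
  let t : Scheme.PointsOver π ck := ⟨Spec.map ρk ≫ s, by
    rw [Category.assoc, hs2, ← Spec.map_comp, hiρk]⟩
  -- `t` is periodic
  have htn : IsPeriodicPt (actPt (φ := ck) f hf) n t := by
    obtain ⟨g, hg, h⟩ := actPt_iterate f hf n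
    have h1 : P.1 ≫ g = P.1 := by
      have h2 := isPeriodicPt_minimalPeriod
        (actPt (φ := CommRingCat.ofHom (algebraMap (𝓞 F) K)) f hf) P
      rw [hPn, IsPeriodicPt, IsFixedPt, h] at h2
      exact congrArg Subtype.val h2
    have h3 : s ≫ g = s := by
      have := hval.uniqueness Sq
      have h4 := Subsingleton.elim
        (⟨s ≫ g, by
          change Spec.map aK ≫ s ≫ g = P.1
          rw [← Category.assoc, hs1, h1], by
          change (s ≫ g) ≫ π = Spec.map iA
          rw [Category.assoc, hg, hs2]⟩ : Sq.commSq.LiftStruct) ⟨s, hs1, hs2⟩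
      exact congrArg CommSq.LiftStruct.l h4
    rw [IsPeriodicPt, IsFixedPt, h]
    refine Subtype.ext ?_
    change (Spec.map ρk ≫ s) ≫ g = Spec.map ρk ≫ s
    rw [Category.assoc, h3]
  let r := minimalPeriod (actPt (φ := ck) f hf) t
  have hr0 : 0 < r := htn.minimalPeriod_pos hn0
  have hrn : r ∣ n := htn.minimalPeriod_dvd
  have hrT : r ≤ Nat.card (Scheme.PointsOver π ck) := by
    rw [← Nat.card_fin r]
    refine Nat.card_le_card_of_injective
      (fun j : Fin r => (actPt (φ := ck) f hf)^[j] t) ?_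
    intro j j' h
    exact Fin.ext (iterate_injOn_Iio_minimalPeriod j.2 j'.2 h)
  obtain ⟨g, hg, h⟩ := actPt_iterate f hf r
  have htg : t.1 ≫ g = t.1 := by
    have h2 := isPeriodicPt_minimalPeriod (actPt (φ := ck) f hf) t
    change (actPt (φ := ck) f hf)^[r] t = t at h2
    rw [h] at h2
    exact congrArg Subtype.val h2
  have hmin : minimalPeriod (actPt (φ := cK) g hg) P = n / r := by
    rw [← h, minimalPeriod_iterate_eq_div_gcd hr0.ne']
    change minimalPeriod (actPt (φ := CommRingCat.ofHom (algebraMap (𝓞 F) K)) f hf) P /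
      Nat.gcd (minimalPeriod (actPt (φ := CommRingCat.ofHom (algebraMap (𝓞 F) K)) f hf) P) r = _
    rw [hPn, Nat.gcd_eq_right hrn]
  have hdvd := hN t g hg s P rfl htg hs1.symm
    (by rw [hmin]; exact Nat.div_pos (Nat.le_of_dvd hn0 hrn) hr0)
    (by rw [hmin]; exact hcop.coprime_dvd_left (Nat.div_dvd_of_dvd hrn))
  rw [hmin] at hdvd
  have hle : n / r ≤ ∑ t, N t := (Nat.le_of_dvd (hN0 t) hdvd).trans
    (Finset.single_le_sum (f := N) (fun _ _ => Nat.zero_le _) (Finset.mem_univ t))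
  calc n = r * (n / r) := (Nat.mul_div_cancel' hrn).symm
    _ ≤ Nat.card (Scheme.PointsOver π ck) * ∑ t, N t := Nat.mul_le_mul hrT hle
    _ ≤ _ := by omega
end
end

section
/- Let F be a number field with ring of integers O_F, and for n ≥ 1 let F^(n) be the compositum (inside a fixed algebraic closure of F) of all extensions of F of degree at most n. Let X be a proper variety over Spec(O_F) and f : X → X an O_F-morphism. Then Per(X(F^(n)), f) is finite. -/
open AlgebraicGeometry CategoryTheory Limits Function NumberField

noncomputable section

set_option synthInstance.maxHeartbeats 1000000
set_option maxHeartbeats 1000000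

/-- `F^(n)`: the compositum, inside a fixed algebraic closure `Ω` of `F`, of all extensions of
`F` of degree at most `n`. -/
def compositumOfDegreeLE (F Ω : Type*) [Field F] [Field Ω] [Algebra F Ω] (n : ℕ) :
    IntermediateField F Ω :=
  ⨆ L : {L : IntermediateField F Ω // FiniteDimensional F L ∧ Module.finrank F L ≤ n}, L.1

section Helpers

open IsLocalRing

lemma aux_pow_filtration {B : Type*} [CommRing B] [IsLocalRing B] (τ : B →+* B)
    (hτ : ∀ b, τ b - b ∈ maximalIdeal B ^ 2) (i : ℕ) :
    ∀ b ∈ maximalIdeal B ^ i, τ b - b ∈ maximalIdeal B ^ (i + 1) := by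
  have hmem : ∀ b ∈ maximalIdeal B, τ b - b ∈ maximalIdeal B ^ 2 := fun b _ => hτ b
  induction i with
  | zero => intro b _; simpa using Ideal.pow_le_self (by norm_num) (hτ b)
  | succ i ih =>
    intro b hb
    rw [pow_succ] at hb
    refine Submodule.mul_induction_on hb ?_ ?_
    · intro x hx y hy
      have h1 := ih x hx
      have h2 := hτ y
      have hty : τ y ∈ maximalIdeal B := by
        have := Ideal.add_mem _ (Ideal.pow_le_self (by norm_num) h2) hy
        simpa using this
      have e : τ (x * y) - x * y = (τ x - x) * τ y + x * (τ y - y) := by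
        rw [map_mul]; ring
      rw [e]
      refine Ideal.add_mem _ ?_ ?_
      · rw [pow_succ]; exact Ideal.mul_mem_mul h1 hty
      · have := Ideal.mul_mem_mul hx h2
        rwa [← pow_add] at this
    · intro x y hx hy
      have := Ideal.add_mem _ hx hy
      rw [map_add]
      convert this using 1; ring

lemma aux_unip {B : Type*} [CommRing B] [IsLocalRing B] [IsNoetherianRing B] (p : ℕ)
    (hp : (p : B) ∈ maximalIdeal B) (τ : B →+* B)
    (hτ : ∀ b, τ b - b ∈ maximalIdeal B ^ 2) (u : ℕ) (hu : Nat.Coprime u p)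
    (h : ∀ b, τ^[u] b = b) (b : B) : τ b = b := by
  have hunit : IsUnit (u : B) := by
    by_contra hn
    have hum : (u : B) ∈ maximalIdeal B := (mem_maximalIdeal _).mpr hn
    have hb : ((u.gcdA p : ℤ) : B) * u + (u.gcdB p : ℤ) * p = 1 := by
      have := Nat.gcd_eq_gcd_ab u p
      rw [hu.gcd_eq_one] at this
      have := congrArg (Int.cast : ℤ → B) this
      push_cast at this
      rw [this]; ring
    have : (1 : B) ∈ maximalIdeal B := by
      rw [← hb]
      exact Ideal.add_mem _ (Ideal.mul_mem_left _ _ hum) (Ideal.mul_mem_left _ _ hp)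
    exact (Ideal.ne_top_iff_one _).mp (maximalIdeal.isMaximal B).ne_top this
  have key : ∀ N : ℕ, ∀ b, τ b - b ∈ maximalIdeal B ^ N := by
    intro N
    induction N with
    | zero => simp
    | succ N ih =>
      intro b
      have step : ∀ j : ℕ, τ^[j] b - b - j * (τ b - b) ∈ maximalIdeal B ^ (N + 1) := by
        intro j
        induction j with
        | zero => simp
        | succ j ihj =>
          have e : τ^[j+1] b - b - ((j + 1 : ℕ) : B) * (τ b - b) =
            (τ (τ^[j] b - b) - (τ^[j] b - b)) + (τ^[j] b - b - j * (τ b - b)) := by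
            rw [Function.iterate_succ_apply', map_sub]; push_cast; ring
          rw [e]
          refine Ideal.add_mem _ (aux_pow_filtration τ hτ N _ ?_) ihj
          have := Ideal.add_mem _ (Ideal.pow_le_pow_right (Nat.le_succ N) ihj)
            (Ideal.mul_mem_left _ (j : B) (ih b))
          simpa using this
      have := step u
      rw [h b] at this
      have h2 : (u : B) * (τ b - b) ∈ maximalIdeal B ^ (N + 1) := by
        have := Ideal.neg_mem_iff _ |>.mpr this
        simpa using this
      exact (Ideal.unit_mul_mem_iff_mem _ hunit).mp h2
  have : τ b - b ∈ (⨅ i : ℕ, maximalIdeal B ^ i) := by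
    rw [Ideal.mem_iInf]; exact fun i => key i b
  rw [Ideal.iInf_pow_eq_bot_of_isLocalRing _ (maximalIdeal.isMaximal B).ne_top] at this
  exact sub_eq_zero.mp this

lemma iterate_eq_of_dvd {α : Type*} {f : α → α} {a b : ℕ} (h : a ∣ b)
   (hf : ∀ x, f^[a] x = x) (x : α) : f^[b] x = x := by
  obtain ⟨c, rfl⟩ := h
  exact (show Function.IsPeriodicPt f a x from hf x).mul_const c

/-- iterates of a ring hom -/
lemma exists_ringHom_iterate {B : Type*} [CommRing B] (σ : B →+* B) (k : ℕ) :
    ∃ τ : B →+* B, ∀ b, τ b = σ^[k] b := ⟨σ ^ k, fun b => by simp [RingHom.coe_pow]⟩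

lemma aux_order_s13 {B : Type*} [CommRing B] [IsLocalRing B] [IsNoetherianRing B] (p : ℕ)
    (hpp : p.Prime)
    (hp : (p : B) ∈ maximalIdeal B) [Finite (B ⧸ maximalIdeal B ^ 2)] (σ : B →+* B) (r : ℕ)
    (hr : 0 < r) (h : ∀ b, σ^[r] b = b) (E : ℕ)
    (hE : (Nat.card (B ⧸ maximalIdeal B ^ 2)).factorial ∣ E) :
    ∃ s : ℕ, ∀ b, σ^[E * p ^ s] b = b := by
  obtain ⟨s, u, hu, hru⟩ := Nat.exists_eq_pow_mul_and_not_dvd hr.ne' p hpp.ne_one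
  refine ⟨s, ?_⟩
  have hbij : Function.Bijective σ := by
    have hr1 : r = (r - 1) + 1 := by omega
    constructor
    · intro a b hab
      have := congrArg (σ^[r-1]) hab
      rwa [← Function.iterate_succ_apply, ← Function.iterate_succ_apply, Nat.succ_eq_add_one,
        ← hr1, h, h] at this
    · intro b
      exact ⟨σ^[r-1] b, by rw [← Function.iterate_succ_apply' σ, Nat.succ_eq_add_one, ← hr1, h]⟩
  let e : B ≃+* B := RingEquiv.ofBijective σ hbij
  have hmap : ∀ b, b ∈ maximalIdeal B → σ b ∈ maximalIdeal B := by
    intro b hb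
    rw [mem_maximalIdeal, mem_nonunits_iff] at hb ⊢
    intro h'
    exact hb ((MulEquiv.isUnit_map (e : B ≃* B)).mp h')
  have hle : maximalIdeal B ^ 2 ≤ (maximalIdeal B ^ 2).comap σ := by
    rw [← Ideal.map_le_iff_le_comap, Ideal.map_pow]
    exact Ideal.pow_right_mono (Ideal.map_le_iff_le_comap.mpr hmap) 2
  let σb : B ⧸ maximalIdeal B ^ 2 →+* B ⧸ maximalIdeal B ^ 2 := Ideal.quotientMap _ σ hle
  have hσb : ∀ k b, σb^[k] (Ideal.Quotient.mk _ b) = Ideal.Quotient.mk _ (σ^[k] b) := by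
    intro k
    induction k with
    | zero => simp
    | succ k ih =>
      intro b
      rw [Function.iterate_succ_apply', ih, Function.iterate_succ_apply']
      simp [σb]
  have hEb : ∀ b, σ^[E] b - b ∈ maximalIdeal B ^ 2 := by
    intro b
    rw [← Ideal.Quotient.eq, ← hσb]
    refine iterate_eq_of_dvd hE ?_ _
    intro x
    obtain ⟨x, rfl⟩ := Ideal.Quotient.mk_surjective x
    have hper : Ideal.Quotient.mk (maximalIdeal B ^ 2) x ∈ Function.periodicPts σb :=
      ⟨r, hr, by rw [Function.IsPeriodicPt, Function.IsFixedPt, hσb, h]⟩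
    have hpos := Function.minimalPeriod_pos_of_mem_periodicPts hper
    have hcard : Function.minimalPeriod σb (Ideal.Quotient.mk (maximalIdeal B ^ 2) x) ≤
        Nat.card (B ⧸ maximalIdeal B ^ 2) := by
      have := Fintype.ofFinite (B ⧸ maximalIdeal B ^ 2)
      rw [Nat.card_eq_fintype_card]
      exact Function.minimalPeriod_le_card
    exact (Function.isPeriodicPt_minimalPeriod σb _).trans_dvd (Nat.dvd_factorial hpos hcard)
  obtain ⟨τ, hτ⟩ := exists_ringHom_iterate σ (E * p ^ s)
  have hit : ∀ k b, τ^[k] b = σ^[E * p ^ s * k] b := by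
    intro k b
    rw [Function.iterate_mul]
    rw [show (⇑τ : B → B) = σ^[E * p ^ s] from funext hτ]
  intro b
  rw [← hτ]
  refine aux_unip p hp τ ?_ u ((Nat.Prime.coprime_iff_not_dvd hpp).mpr hu).symm ?_ b
  · intro b
    rw [hτ, ← Ideal.Quotient.eq, ← hσb]
    refine iterate_eq_of_dvd (Dvd.intro _ rfl) (fun x => ?_) _
    obtain ⟨x, rfl⟩ := Ideal.Quotient.mk_surjective x
    rw [hσb, Ideal.Quotient.eq]
    exact hEb x
  · intro b
    rw [hit]
    refine iterate_eq_of_dvd ?_ h b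
    rw [hru]
    exact ⟨E, by ring⟩

/-- Period bound in a noetherian local ring. -/
lemma aux_local_s13 {A V : Type*} [CommRing A] [IsLocalRing A] [IsNoetherianRing A]
    [CommRing V] [Nontrivial V] (p : ℕ) (hpp : p.Prime)
    (hp : (p : A) ∈ maximalIdeal A) [Finite (A ⧸ maximalIdeal A ^ 2)] (g : A →+* A)
    (φ : A →+* V) (r : ℕ) (hr : 0 < r) (h : ∀ a, φ (g^[r] a) = φ a) :
    ∃ s : ℕ, ∀ a, φ (g^[(Nat.card (A ⧸ maximalIdeal A ^ 2)).factorial * p ^ s] a) = φ a := by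
  let I : Ideal A := ⨅ i : ℕ, RingHom.ker (φ.comp (g ^ i))
  have hI : ∀ a, a ∈ I ↔ ∀ i, φ (g^[i] a) = 0 := by
    intro a; simp [I, RingHom.mem_ker, RingHom.coe_pow]
  have hgI : I ≤ I.comap g := by
    intro a ha
    rw [Ideal.mem_comap, hI]
    intro i
    exact (hI a).mp ha (i + 1)
  have hper : ∀ i a, φ (g^[i] (g^[r] a)) = φ (g^[i] a) := by
    intro i a
    rw [← Function.iterate_add_apply, add_comm, Function.iterate_add_apply, h]
  have hItop : I ≠ ⊤ := by
    intro h1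
    have : (1 : A) ∈ I := h1 ▸ Submodule.mem_top
    have := (hI 1).mp this 0
    simp at this
  have : Nontrivial (A ⧸ I) := Ideal.Quotient.nontrivial_iff.mpr hItop
  have : IsLocalRing (A ⧸ I) := IsLocalRing.of_surjective' _ Ideal.Quotient.mk_surjective
  have hmk : ∀ a ∈ maximalIdeal A, Ideal.Quotient.mk I a ∈ maximalIdeal (A ⧸ I) := by
    have hloc : IsLocalHom (Ideal.Quotient.mk I) :=
      IsLocalHom.of_surjective _ Ideal.Quotient.mk_surjective
    intro a ha
    exact (mem_maximalIdeal _).mpr (map_mem_nonunits_iff (Ideal.Quotient.mk I) a |>.mpr ((mem_maximalIdeal _).mp ha))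
  let σ : A ⧸ I →+* A ⧸ I := Ideal.quotientMap I g hgI
  have hσ : ∀ k b, σ^[k] (Ideal.Quotient.mk _ b) = Ideal.Quotient.mk _ (g^[k] b) := by
    intro k
    induction k with
    | zero => simp
    | succ k ih =>
      intro b
      rw [Function.iterate_succ_apply', ih, Function.iterate_succ_apply']
      simp [σ]
  have hle : maximalIdeal A ^ 2 ≤ (maximalIdeal (A ⧸ I) ^ 2).comap (Ideal.Quotient.mk I) := by
    rw [← Ideal.map_le_iff_le_comap, Ideal.map_pow]
    exact Ideal.pow_right_mono (Ideal.map_le_iff_le_comap.mpr hmk) 2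
  let q : A ⧸ maximalIdeal A ^ 2 →+* (A ⧸ I) ⧸ maximalIdeal (A ⧸ I) ^ 2 :=
    Ideal.quotientMap _ (Ideal.Quotient.mk I) hle
  have hq : Function.Surjective q :=
    Ideal.quotientMap_surjective Ideal.Quotient.mk_surjective
  have : Finite ((A ⧸ I) ⧸ maximalIdeal (A ⧸ I) ^ 2) := Finite.of_surjective q hq
  obtain ⟨s, hs⟩ := aux_order_s13 p hpp (by simpa using hmk _ hp) σ r hr (by
    intro b
    obtain ⟨b, rfl⟩ := Ideal.Quotient.mk_surjective b
    rw [hσ, Ideal.Quotient.eq, hI]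
    intro i
    rw [← RingHom.coe_pow g i, map_sub, map_sub, RingHom.coe_pow, hper, sub_self])
    (Nat.card (A ⧸ maximalIdeal A ^ 2)).factorial
    (Nat.factorial_dvd_factorial (Nat.card_le_card_of_surjective q hq))
  refine ⟨s, fun a => ?_⟩
  have := hs (Ideal.Quotient.mk _ a)
  rw [hσ, Ideal.Quotient.eq, hI] at this
  have := this 0
  simpa [sub_eq_zero] using this

open NumberField IsLocalRing

lemma val_integral_le_one {M : Type*} [Field M] (V : ValuationSubring M) (y : M)
    (hy : IsIntegral ℤ y) : V.valuation y ≤ 1 := by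
  rw [ValuationSubring.valuation_le_one_iff]
  obtain ⟨z, hz⟩ := IsIntegrallyClosed.algebraMap_eq_of_integral (R := V) (hy.tower_top (A := V))
  rw [← hz]; exact z.2

lemma mul_lt_one_of_le_of_lt' {Γ : Type*} [LinearOrderedCommGroupWithZero Γ] {a b : Γ}
    (ha : a ≤ 1) (hb : b < 1) : a * b < 1 :=
  lt_of_le_of_lt (mul_le_of_le_one_left' ha) hb

lemma core_frob (F M : Type*) [Field F] [Field M] [NumberField F] [NumberField M] [Algebra F M]
    [IsGalois F M] (V : ValuationSubring M) (ℓ : ℕ) (hℓ0 : ℓ ≠ 0) (hℓ : V.valuation (ℓ : M) < 1)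
    (I : Ideal (𝓞 F)) (hI : ∀ y : 𝓞 F, y ∈ I ↔ V.valuation (algebraMap F M (y : F)) < 1) :
    ∃ σ : Gal(M/F), ∀ (N : ℕ) (x : M), V.valuation x ≤ 1 → (σ ^ N) x = x →
      V.valuation (x ^ (Nat.card (𝓞 F ⧸ I) ^ N) - x) < 1 := by
  have hint : ∀ y : 𝓞 M, algebraMap (𝓞 M) M y ∈ V.toSubring := fun y =>
    (V.valuation_le_one_iff _).mp (val_integral_le_one V _ y.2)
  let ι : 𝓞 M →+* V := (algebraMap (𝓞 M) M).codRestrict V.toSubring hint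
  let P : Ideal (𝓞 M) := (maximalIdeal V).comap ι
  have hP : ∀ y : 𝓞 M, y ∈ P ↔ V.valuation (y : M) < 1 := by
    intro y
    exact V.valuation_lt_one_iff (ι y)
  have hPprime : P.IsPrime := Ideal.comap_isPrime _ _
  have hPne : P ≠ ⊥ := by
    intro h
    have : (ℓ : 𝓞 M) ∈ P := (hP _).mpr (by simpa using hℓ)
    rw [h, Ideal.mem_bot] at this
    exact hℓ0 (by exact_mod_cast this)
  have hfin : Finite (𝓞 M ⧸ P) := Ideal.finiteQuotientOfFreeOfNeBot P hPne
  have hPI : P.under (𝓞 F) = I := by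
    ext y
    rw [Ideal.mem_comap, hP, hI]
    rfl
  have : Algebra.IsInvariant (𝓞 F) (𝓞 M) Gal(M/F) := by infer_instance
  obtain ⟨σ, hσ⟩ := IsArithFrobAt.exists_of_isInvariant (𝓞 F) Gal(M/F) P
  refine ⟨σ, fun N x hx hσx => ?_⟩
  set q := Nat.card (𝓞 F ⧸ I) with hq
  have hF : ∀ y : 𝓞 M, Ideal.Quotient.mk P (σ • y) = Ideal.Quotient.mk P y ^ q := by
    intro y
    have := hσ y
    rw [hPI] at this
    rw [← map_pow, Ideal.Quotient.eq]
    exact this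
  have hFN : ∀ (N : ℕ) (y : 𝓞 M),
      Ideal.Quotient.mk P (σ ^ N • y) = Ideal.Quotient.mk P y ^ (q ^ N) := by
    intro N
    induction N with
    | zero => simp
    | succ N ih => intro y; rw [pow_succ', mul_smul, hF, ih, ← pow_mul, pow_succ]
  have hv : ∀ y : 𝓞 M, V.valuation ((y : M) ^ (q ^ N) - (σ ^ N) (y : M)) < 1 := by
    intro y
    have := hFN N y
    rw [← map_pow, eq_comm, Ideal.Quotient.eq, hP] at this
    exact this
  have hfrac : ∃ a b : 𝓞 M, b ∉ P ∧ x * (b : M) = a := by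
    let w : IsDedekindDomain.HeightOneSpectrum (𝓞 M) := ⟨P, hPprime, hPne⟩
    obtain ⟨a, ⟨b, hb⟩, hab | hab⟩ := w.exists_primeCompl_mul_eq_or_mul_eq x
    · exact ⟨a, b, hb, hab⟩
    · refine ⟨b, a, fun haP => hb ?_, hab⟩
      change b ∈ P
      rw [hP] at haP ⊢
      change V.valuation (algebraMap (𝓞 M) M b) < 1
      rw [← hab, map_mul]
      exact mul_lt_one_of_le_of_lt' hx haP
  obtain ⟨a, b, hb, hab⟩ := hfrac
  have hb1 : V.valuation (b : M) = 1 := by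
    rw [hP, not_lt] at hb
    exact le_antisymm (val_integral_le_one V _ b.2) hb
  set Q := q ^ N
  have hτ : (σ ^ N) (a : M) = x * (σ ^ N) (b : M) := by
    rw [← hab, map_mul, hσx]
  have e : (b : M) ^ Q * (x ^ Q - x) =
      ((a : M) ^ Q - (σ ^ N) (a : M)) - x * ((b : M) ^ Q - (σ ^ N) (b : M)) := by
    rw [hτ, ← hab]; ring
  have h1 : V.valuation ((b : M) ^ Q * (x ^ Q - x)) < 1 := by
    rw [e]
    refine lt_of_le_of_lt (Valuation.map_sub _ _ _) (max_lt (hv a) ?_)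
    rw [map_mul]
    exact mul_lt_one_of_le_of_lt' hx (hv b)
  simpa [map_mul, map_pow, hb1] using h1

lemma val_lt_one_iff {K : Type*} [Field K] (V : ValuationSubring K) (x : K) :
    V.valuation x < 1 ↔ x = 0 ∨ x⁻¹ ∉ V := by
  rcases eq_or_ne x 0 with rfl | hx
  · simp
  · simp only [hx, false_or]
    rw [← V.valuation_le_one_iff, map_inv₀, not_le, one_lt_inv₀]
    exact (Valuation.pos_iff _).mpr hx

lemma exists_residue_bound (F Ω : Type*) [Field F] [NumberField F] [Field Ω] [Algebra F Ω]
    [IsAlgClosed Ω] [Algebra.IsAlgebraic F Ω] (N : ℕ) (hN : 0 < N)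
    (V : ValuationSubring Ω) (ℓ : ℕ) (hℓ0 : ℓ ≠ 0) (hℓ : V.valuation (ℓ : Ω) < 1) :
    ∃ Q : ℕ, 1 < Q ∧ ∀ x : Ω, V.valuation x ≤ 1 → (∀ σ : Gal(Ω/F), (σ ^ N) x = x) →
      V.valuation (x ^ Q - x) < 1 := by
  have : CharZero Ω := charZero_of_injective_algebraMap (algebraMap F Ω).injective
  have hint : ∀ y : 𝓞 F, ((algebraMap F Ω).comp (algebraMap (𝓞 F) F)) y ∈ V.toSubring := fun y =>
    (V.valuation_le_one_iff _).mp (val_integral_le_one V _ (y.2.map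
      (algebraMap F Ω : F →+* Ω).toIntAlgHom))
  let ι : 𝓞 F →+* V := ((algebraMap F Ω).comp (algebraMap (𝓞 F) F)).codRestrict V.toSubring hint
  let I : Ideal (𝓞 F) := (maximalIdeal V).comap ι
  have hI : ∀ y : 𝓞 F, y ∈ I ↔ V.valuation (algebraMap F Ω (y : F)) < 1 := by
    intro y
    exact V.valuation_lt_one_iff (ι y)
  have hIprime : I.IsPrime := Ideal.comap_isPrime _ _
  have hIne : I ≠ ⊥ := by
    intro h
    have : (ℓ : 𝓞 F) ∈ I := (hI _).mpr (by simpa using hℓ)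
    rw [h, Ideal.mem_bot] at this
    exact hℓ0 (by exact_mod_cast this)
  have hfin : Finite (𝓞 F ⧸ I) := Ideal.finiteQuotientOfFreeOfNeBot I hIne
  have hnt : Nontrivial (𝓞 F ⧸ I) := Ideal.Quotient.nontrivial_iff.mpr hIprime.ne_top
  refine ⟨Nat.card (𝓞 F ⧸ I) ^ N, Nat.one_lt_pow hN.ne' Finite.one_lt_card, ?_⟩
  intro x hx hσx
  have hnorm : Normal F Ω := by
    refine normal_iff.mpr fun z => ⟨Algebra.IsIntegral.isIntegral z, IsAlgClosed.splits _⟩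
  have hfd : FiniteDimensional F (IntermediateField.adjoin F {x}) :=
    IntermediateField.adjoin.finiteDimensional (Algebra.IsIntegral.isIntegral x)
  let M := IntermediateField.normalClosure F (IntermediateField.adjoin F {x}) Ω
  have hMfd : FiniteDimensional F M := inferInstance
  have hMn : Normal F M := inferInstance
  have hMg : IsGalois F M := ⟨⟩
  have hMnf : NumberField M := NumberField.of_module_finite F M
  have hxM : x ∈ M := by
    have h1 : IntermediateField.adjoin F {x} ≤ M := IntermediateField.le_normalClosure _
    exact h1 (IntermediateField.mem_adjoin_simple_self F x)
  let W : ValuationSubring M := V.comap (algebraMap M Ω)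
  have hW1 : ∀ z : M, W.valuation z < 1 ↔ V.valuation (z : Ω) < 1 := by
    intro z
    rw [val_lt_one_iff, val_lt_one_iff, ValuationSubring.mem_comap]
    simp
  have hW2 : ∀ z : M, W.valuation z ≤ 1 ↔ V.valuation (z : Ω) ≤ 1 := by
    intro z
    rw [ValuationSubring.valuation_le_one_iff, ValuationSubring.valuation_le_one_iff,
      ValuationSubring.mem_comap]
    simp
  obtain ⟨σ, hσ⟩ := core_frob F M W ℓ hℓ0 ((hW1 _).mpr (by simpa using hℓ)) I (by
    intro y; rw [hI, hW1]; rfl)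
  obtain ⟨τ, rfl⟩ := AlgEquiv.restrictNormalHom_surjective (F := F) (K₁ := M) Ω σ
  have := hσ N ⟨x, hxM⟩ ((hW2 _).mpr hx) (by
    rw [← map_pow]
    apply Subtype.ext
    have := AlgEquiv.restrictNormal_commutes (τ ^ N) M ⟨x, hxM⟩
    exact this.trans (hσx τ))
  rw [hW1] at this
  simpa using this

lemma gal_pow_factorial (F Ω : Type*) [Field F] [Field Ω] [Algebra F Ω] (n : ℕ)
    (σ : Gal(Ω/F)) (x : Ω)
    (hx : x ∈ ⨆ L : {L : IntermediateField F Ω // FiniteDimensional F L ∧ Module.finrank F L ≤ n},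
      L.1) : (σ ^ n.factorial) x = x := by
  have hle : (⨆ L : {L : IntermediateField F Ω // FiniteDimensional F L ∧ Module.finrank F L ≤ n},
      L.1) ≤ IntermediateField.fixedField (Subgroup.zpowers (σ ^ n.factorial)) := by
    refine iSup_le ?_
    rintro ⟨L, hL, hLn⟩ y hy
    have key : (σ ^ n.factorial) y = y := by
      classical
      have hyint : IsIntegral F (⟨y, hy⟩ : L) := Algebra.IsIntegral.isIntegral _
      have hyint' : IsIntegral F y := hyint.map L.val
      let S := {z : Ω // z ∈ (minpoly F y).rootSet Ω}
      have hfin : Finite S := (Polynomial.rootSet_finite _ _).to_subtype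
      have := Fintype.ofFinite S
      have hcard : Fintype.card S ≤ n := by
        have h1 : Fintype.card S ≤ (minpoly F y).natDegree := by
          rw [← Nat.card_eq_fintype_card]
          change Set.ncard ((minpoly F y).rootSet Ω) ≤ _
          exact Polynomial.ncard_rootSet_le _ _
        have h2 : (minpoly F y).natDegree = (minpoly F (⟨y, hy⟩ : L)).natDegree := by
          rw [IntermediateField.minpoly_eq]
        rw [h2] at h1
        exact h1.trans ((minpoly.natDegree_le _).trans hLn)
      have hmem : ∀ z ∈ (minpoly F y).rootSet Ω, σ z ∈ (minpoly F y).rootSet Ω := by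
        intro z hz
        rw [Polynomial.mem_rootSet] at hz ⊢
        refine ⟨hz.1, ?_⟩
        rw [Polynomial.aeval_algHom_apply, hz.2, map_zero]
      let g : S → S := fun z => ⟨σ z.1, hmem _ z.2⟩
      have hg : Function.Injective g := by
        intro a b hab
        exact Subtype.ext (σ.injective (congrArg Subtype.val hab))
      let y0 : S := ⟨y, by
        rw [Polynomial.mem_rootSet]; exact ⟨minpoly.ne_zero hyint', minpoly.aeval _ _⟩⟩
      have hper : y0 ∈ Function.periodicPts g := hg.mem_periodicPts y0
      have hp : Function.IsPeriodicPt g n.factorial y0 :=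
        (Function.isPeriodicPt_minimalPeriod g y0).trans_dvd
          (Nat.dvd_factorial (Function.minimalPeriod_pos_of_mem_periodicPts hper)
            (Function.minimalPeriod_le_card.trans hcard))
      have hit : ∀ k, (g^[k] y0).1 = (σ ^ k) y := by
        intro k
        induction k with
        | zero => rfl
        | succ k ih =>
          rw [Function.iterate_succ_apply', pow_succ', AlgEquiv.mul_apply, ← ih]
      rw [← hit, hp]
    rw [IntermediateField.mem_fixedField_iff]
    rintro τ ⟨k, rfl⟩
    exact (MulAction.mem_stabilizer_iff (G := Gal(Ω/F)) (a := y)).mp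
      (Subgroup.zpow_mem _ (MulAction.mem_stabilizer_iff.mpr key) k)
  exact (IntermediateField.mem_fixedField_iff _ _).mp (hle hx) _ (Subgroup.mem_zpowers _)

lemma exists_valuation (F Ω : Type*) [Field F] [NumberField F] [Field Ω] [Algebra F Ω]
    [IsAlgClosed Ω] [Algebra.IsAlgebraic F Ω] (n : ℕ) (ℓ : ℕ) (hℓ : ℓ.Prime)
    (K : IntermediateField F Ω)
    (hK : ∀ σ : Gal(Ω/F), ∀ x ∈ K, (σ ^ n.factorial) x = x) :
    ∃ V : ValuationSubring K, (∀ y : 𝓞 F, algebraMap F K (y : F) ∈ V) ∧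
      (ℓ : V) ∈ maximalIdeal V ∧ Finite (ResidueField V) := by
  have : CharZero Ω := charZero_of_injective_algebraMap (algebraMap F Ω).injective
  obtain ⟨V', -, hV'⟩ := Ideal.image_subset_nonunits_valuationSubring
    (A := (Int.castRingHom Ω).range) (Ideal.span {(ℓ : (Int.castRingHom Ω).range)}) (by
      intro h
      rw [Ideal.span_singleton_eq_top] at h
      obtain ⟨⟨_, ⟨m, rfl⟩⟩, hm⟩ := h.exists_right_inv
      have := congrArg Subtype.val hm
      simp at this
      have h2 : (ℓ : ℤ) * m = 1 := by exact_mod_cast this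
      have := Int.natAbs_dvd_natAbs.mpr (Dvd.intro _ h2)
      simp at this
      exact hℓ.one_lt.ne' this)
  have hℓV : V'.valuation (ℓ : Ω) < 1 := by
    rw [← ValuationSubring.mem_nonunits_iff]
    apply hV'
    exact ⟨(ℓ : (Int.castRingHom Ω).range), Ideal.subset_span rfl, by simp⟩
  obtain ⟨Q, hQ, hQx⟩ := exists_residue_bound F Ω n.factorial (Nat.factorial_pos n) V' ℓ
    hℓ.ne_zero hℓV
  let V : ValuationSubring K := V'.comap (algebraMap K Ω)
  have hW1 : ∀ z : K, V.valuation z < 1 ↔ V'.valuation (z : Ω) < 1 := by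
    intro z
    rw [val_lt_one_iff, val_lt_one_iff, ValuationSubring.mem_comap]
    simp
  refine ⟨V, fun y => ?_, ?_, ?_⟩
  · rw [← V.valuation_le_one_iff]
    exact val_integral_le_one V _ (y.2.map (algebraMap F K : F →+* K).toIntAlgHom)
  · rw [V.valuation_lt_one_iff, hW1]
    simpa using hℓV
  · have hroot : ∀ y : ResidueField V, y ^ Q - y = 0 := by
      intro y
      obtain ⟨y, rfl⟩ := IsLocalRing.residue_surjective y
      rw [← map_pow, ← map_sub, residue_eq_zero_iff, V.valuation_lt_one_iff, hW1]
      have := hQx (y : K) ((V'.valuation_le_one_iff _).mpr y.2) (fun σ => hK σ _ y.1.2)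
      simpa using this
    have hne : (Polynomial.X ^ Q - Polynomial.X : Polynomial (ResidueField V)) ≠ 0 :=
      FiniteField.X_pow_card_sub_X_ne_zero _ hQ
    have hf := Polynomial.finite_setOfPred_isRoot hne
    have : {x | (Polynomial.X ^ Q - Polynomial.X : Polynomial (ResidueField V)).IsRoot x} =
      Set.univ := by
      ext y; simpa using hroot y
    rw [this] at hf
    exact Set.finite_univ_iff.mp hf

end Helpers

open IsLocalRing in
lemma exists_stalk_factor {V : Type} [CommRing V] [IsLocalRing V] {X : Scheme.{0}}
    (t : Spec (CommRingCat.of V) ⟶ X) (x : X) (hx : t (closedPoint V) = x) :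
    ∃ φ : X.presheaf.stalk x ⟶ CommRingCat.of V, IsLocalHom φ.hom ∧
      Spec.map φ ≫ X.fromSpecStalk x = t := by
  subst hx
  exact ⟨Scheme.stalkClosedPointTo t, inferInstance,
    Scheme.Spec_stalkClosedPointTo_fromSpecStalk t⟩

lemma exists_stalk_endo {X : Scheme.{0}} (h : X ⟶ X) (x x' : X) (hx : h x = x') :
    ∃ g : X.presheaf.stalk x' ⟶ X.presheaf.stalk x,
      Spec.map g ≫ X.fromSpecStalk x' = X.fromSpecStalk x ≫ h := by
  subst hx
  exact ⟨h.stalkMap x, Scheme.SpecMap_stalkMap_fromSpecStalk h⟩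

lemma exists_iterate_hom {X : Scheme.{0}} (f : X ⟶ X) (m : ℕ) :
    ∃ h : X ⟶ X, ∀ (Y : Scheme.{0}) (s : Y ⟶ X), (fun t : Y ⟶ X => t ≫ f)^[m] s = s ≫ h := by
  induction m with
  | zero => exact ⟨𝟙 X, fun Y s => by simp⟩
  | succ m ih =>
    obtain ⟨h, hh⟩ := ih
    exact ⟨h ≫ f, fun Y s => by rw [Function.iterate_succ_apply', hh, Category.assoc]⟩

lemma actPt_iterate_s13 {X : Scheme.{0}} {R A : CommRingCat.{0}} {π : X ⟶ Spec R} {φ : R ⟶ A}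
    (f : X ⟶ X) (hf : f ≫ π = π) (m : ℕ) (P : Scheme.PointsOver π φ) :
    ((actPt f hf)^[m] P).1 = (fun t : Spec A ⟶ X => t ≫ f)^[m] P.1 := by
  induction m with
  | zero => rfl
  | succ m ih => rw [Function.iterate_succ_apply', Function.iterate_succ_apply', ← ih]; rfl

lemma precomp_iterate {X Y Z : Scheme.{0}} (f : X ⟶ X) (m : ℕ) (u : Y ⟶ Z) (t : Z ⟶ X) :
    u ≫ (fun t : Z ⟶ X => t ≫ f)^[m] t = (fun t : Y ⟶ X => t ≫ f)^[m] (u ≫ t) := by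
  obtain ⟨h, hh⟩ := exists_iterate_hom f m
  rw [hh, hh, Category.assoc]

lemma finite_ringHom {R A k : Type} [CommRing R] [CommRing A] [CommRing k] [Finite k]
    (χ : R →+* A) (hχ : χ.FiniteType) (φ : R →+* k) :
    Finite {ψ : A →+* k // ψ.comp χ = φ} := by
  algebraize [χ, φ]
  have hft : Algebra.FiniteType R A := hχ
  obtain ⟨s, hs⟩ := hft.out
  refine Finite.of_injective (β := s → k) (fun ψ a => ψ.1 a) ?_
  rintro ⟨ψ₁, h₁⟩ ⟨ψ₂, h₂⟩ h
  let a₁ : A →ₐ[R] k := { ψ₁ with commutes' := fun r => congrArg (fun g : R →+* k => g r) h₁ }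
  let a₂ : A →ₐ[R] k := { ψ₂ with commutes' := fun r => congrArg (fun g : R →+* k => g r) h₂ }
  have : a₁ = a₂ := by
    refine AlgHom.ext_of_adjoin_eq_top hs ?_
    intro x hx
    exact congrFun h ⟨x, hx⟩
  ext x
  exact congrArg (fun a : A →ₐ[R] k => a x) this

lemma finite_points_affine {R : CommRingCat.{0}} (U : Scheme.{0}) (π : U ⟶ Spec R)
    (hπ : LocallyOfFiniteType π) [IsAffine U] (k : Type) [Field k] [Finite k]
    (φ : R ⟶ CommRingCat.of k) :
    Finite {t : Spec (CommRingCat.of k) ⟶ U // t ≫ π = Spec.map φ} := by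
  obtain ⟨χ, hχ⟩ := Spec.map_surjective (U.isoSpec.inv ≫ π)
  have hft : χ.hom.FiniteType := by
    rw [← HasRingHomProperty.Spec_iff (P := @LocallyOfFiniteType), hχ]
    infer_instance
  have := finite_ringHom χ.hom hft φ.hom
  choose β hβ using fun t : Spec (CommRingCat.of k) ⟶ U => Spec.map_surjective (t ≫ U.isoSpec.hom)
  refine Finite.of_injective (β := {ψ : Γ(U, ⊤) →+* k // ψ.comp χ.hom = φ.hom})
    (fun t => ⟨(β t.1).hom, ?_⟩) ?_
  · have : χ ≫ β t.1 = φ := by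
      apply Spec.map_injective
      rw [Spec.map_comp, hβ, hχ]
      refine Eq.trans ?_ t.2
      simp
    exact congrArg CommRingCat.Hom.hom this
  · intro t t' h
    have h1 : β t.1 = β t'.1 := CommRingCat.hom_ext (congrArg Subtype.val h)
    have h2 : t.1 ≫ U.isoSpec.hom = t'.1 ≫ U.isoSpec.hom := by rw [← hβ, ← hβ, h1]
    exact Subtype.ext ((cancel_mono _).mp h2)

lemma finite_points {X : Scheme.{0}} {R : CommRingCat.{0}} (π : X ⟶ Spec R) [LocallyOfFiniteType π]
    [CompactSpace X] (k : Type) [Field k] [Finite k] (φ : R ⟶ CommRingCat.of k) :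
    Finite (Scheme.PointsOver π φ) := by
  let 𝒰 := X.affineCover.finiteSubcover
  have hfac : ∀ s : Scheme.PointsOver π φ, ∃ (i : 𝒰.I₀) (t : Spec (CommRingCat.of k) ⟶ 𝒰.X i),
      t ≫ 𝒰.f i = s.1 := by
    intro s
    obtain ⟨i, z, hz⟩ := 𝒰.exists_eq (s.1 (IsLocalRing.closedPoint k))
    refine ⟨i, IsOpenImmersion.lift (𝒰.f i) s.1 ?_, IsOpenImmersion.lift_fac _ _ _⟩
    rintro _ ⟨w, rfl⟩
    have hw : w = IsLocalRing.closedPoint k := Subsingleton.elim (α := PrimeSpectrum k) _ _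
    rw [hw]
    exact ⟨z, hz⟩
  choose i t ht using hfac
  have hfin : ∀ i : 𝒰.I₀, Finite {t : Spec (CommRingCat.of k) ⟶ 𝒰.X i //
      t ≫ 𝒰.f i ≫ π = Spec.map φ} := by
    intro i
    exact finite_points_affine _ (𝒰.f i ≫ π) inferInstance k φ
  refine Finite.of_injective (β := Σ i : 𝒰.I₀, {t : Spec (CommRingCat.of k) ⟶ 𝒰.X i //
      t ≫ 𝒰.f i ≫ π = Spec.map φ}) (fun s => ⟨i s, t s, by
        rw [← Category.assoc, ht]; exact s.2⟩) ?_
  intro s s' h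
  have : t s ≫ 𝒰.f (i s) = t s' ≫ 𝒰.f (i s') := by
    have := congrArg (fun z : (Σ i : 𝒰.I₀, {t : Spec (CommRingCat.of k) ⟶ 𝒰.X i //
      t ≫ 𝒰.f i ≫ π = Spec.map φ}) => z.2.1 ≫ 𝒰.f z.1) h
    exact this
  rw [ht, ht] at this
  exact Subtype.ext this

/-- existence of the lift -/
lemma exists_lift {R K : Type} [CommRing R] [Field K] (φ : R →+* K) {X : Scheme.{0}}
    (π : X ⟶ Spec (CommRingCat.of R)) [IsProper π] (V : ValuationSubring K) (ψ : R →+* V)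
    (hψ : (algebraMap V K).comp ψ = φ) (P : Scheme.PointsOver π (CommRingCat.ofHom φ)) :
    ∃ t : Spec (CommRingCat.of V) ⟶ X, t ≫ π = Spec.map (CommRingCat.ofHom ψ) ∧
      Spec.map (CommRingCat.ofHom (algebraMap V K)) ≫ t = P.1 := by
  have hval : ValuativeCriterion π := by
    have h : IsProper π := inferInstance
    rw [IsProper.eq_valuativeCriterion] at h
    exact h.1.1.1
  let S : ValuativeCommSq π :=
    { R := V, K := K, i₁ := P.1, i₂ := Spec.map (CommRingCat.ofHom ψ)
      commSq := ⟨by rw [P.2, ← Spec.map_comp, ← CommRingCat.ofHom_comp, hψ]⟩ }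
  obtain ⟨l⟩ := (hval.existence S).exists_lift
  exact ⟨l.l, l.fac_right, l.fac_left⟩

lemma lift_unique {R K : Type} [CommRing R] [Field K] {X : Scheme.{0}}
    (π : X ⟶ Spec (CommRingCat.of R)) [IsProper π] (V : ValuationSubring K)
    (t t' : Spec (CommRingCat.of V) ⟶ X) (h : t ≫ π = t' ≫ π)
    (h' : Spec.map (CommRingCat.ofHom (algebraMap V K)) ≫ t =
      Spec.map (CommRingCat.ofHom (algebraMap V K)) ≫ t') : t = t' := by
  have hval := IsSeparated.valuativeCriterion π
  let S : ValuativeCommSq π :=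
    { R := V, K := K, i₁ := Spec.map (CommRingCat.ofHom (algebraMap V K)) ≫ t, i₂ := t ≫ π
      commSq := ⟨by rw [Category.assoc]⟩ }
  have := hval S
  have := congrArg CommSq.LiftStruct.l (Subsingleton.elim (α := S.commSq.LiftStruct)
    ⟨t, rfl, rfl⟩ ⟨t', h'.symm, h.symm⟩)
  exact this

lemma fix_apply {X Z : Scheme.{0}} (u : Z ⟶ X) (h : X ⟶ X) (e : u ≫ h = u) (z : Z) :
    h (u z) = u z := by
  rw [← Scheme.Hom.comp_apply, e]

lemma comp_apply_eq {X Y Z : Scheme.{0}} (u : Z ⟶ Y) (t : Y ⟶ X) (z : Z) (y : Y) (e : u z = y) :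
    (u ≫ t) z = t y := by
  rw [Scheme.Hom.comp_apply, e]

open IsLocalRing in
lemma per_prime {R K : Type} [CommRing R] [IsNoetherianRing R] [Field K] (φ : R →+* K)
    {X : Scheme.{0}} (π : X ⟶ Spec (CommRingCat.of R)) [IsProper π] (f : X ⟶ X)
    (hf : f ≫ π = π) (V : ValuationSubring K) (hV : ∀ y, φ y ∈ V) (ℓ : ℕ) (hℓ : ℓ.Prime)
    (hℓV : (ℓ : V) ∈ maximalIdeal V) [Finite (ResidueField V)] :
    ∃ C : ℕ, 0 < C ∧ ∀ P : Scheme.PointsOver π (CommRingCat.ofHom φ),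
      0 < Function.minimalPeriod (actPt f hf) P →
      ∃ s : ℕ, Function.minimalPeriod (actPt f hf) P ∣ C * ℓ ^ s := by
  let ψ : R →+* V := φ.codRestrict V.toSubring hV
  have hψ : (algebraMap V K).comp ψ = φ := by ext; rfl
  have hXc : CompactSpace X := QuasiCompact.compactSpace_of_compactSpace π
  have hXn : IsLocallyNoetherian X := LocallyOfFiniteType.isLocallyNoetherian π
  let ρ : CommRingCat.of V ⟶ CommRingCat.of (ResidueField V) := CommRingCat.ofHom (residue V)
  let Y := Scheme.PointsOver π (CommRingCat.ofHom ψ ≫ ρ)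
  have hYfin : Finite Y := finite_points π (ResidueField V) _
  have := Fintype.ofFinite Y
  let E : Y → ℕ := fun y => (Nat.card
    (X.presheaf.stalk (y.1 (closedPoint (ResidueField V))) ⧸
      maximalIdeal (X.presheaf.stalk (y.1 (closedPoint (ResidueField V)))) ^ 2)).factorial
  refine ⟨(Fintype.card Y).factorial * ∏ y, E y, Nat.mul_pos (Nat.factorial_pos _)
    (Finset.prod_pos fun y _ => Nat.factorial_pos _), ?_⟩
  intro P hP
  set r := Function.minimalPeriod (actPt f hf) P with hr
  obtain ⟨t, htπ, htP⟩ := exists_lift φ π V ψ hψ P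
  have hfπ : ∀ (Z : Scheme.{0}) (s : Z ⟶ X) (j : ℕ), (fun t : Z ⟶ X => t ≫ f)^[j] s ≫ π = s ≫ π := by
    intro Z s j
    induction j with
    | zero => rfl
    | succ j ih => rw [Function.iterate_succ_apply', Category.assoc, hf, ih]
  have htr : (fun t : Spec (CommRingCat.of V) ⟶ X => t ≫ f)^[r] t = t := by
    refine lift_unique π V _ _ (hfπ _ _ _) ?_
    rw [precomp_iterate, htP, ← actPt_iterate_s13 (hf := hf), hr, Function.iterate_minimalPeriod]
  have hdvd : ∀ j, (fun t : Spec (CommRingCat.of V) ⟶ X => t ≫ f)^[j] t = t → r ∣ j := by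
    intro j hj
    apply Function.IsPeriodicPt.minimalPeriod_dvd
    apply Subtype.ext
    rw [actPt_iterate_s13, ← htP, ← precomp_iterate, hj]
  let y : Y := ⟨Spec.map ρ ≫ t, by rw [Category.assoc, htπ, ← Spec.map_comp]⟩
  have hyr : (actPt f hf)^[r] y = y := by
    apply Subtype.ext
    rw [actPt_iterate_s13, ← precomp_iterate, htr]
  have hyper : y ∈ Function.periodicPts (actPt f hf) := ⟨r, hP, hyr⟩
  set m := Function.minimalPeriod (actPt f hf) y with hm
  have hm0 : 0 < m := Function.minimalPeriod_pos_of_mem_periodicPts hyper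
  have hmdvd : m ∣ (Fintype.card Y).factorial :=
    Nat.dvd_factorial hm0 Function.minimalPeriod_le_card
  obtain ⟨h, hh⟩ := exists_iterate_hom f m
  have hyh : y.1 ≫ h = y.1 := by
    rw [← hh, ← actPt_iterate_s13 (hf := hf), hm, Function.iterate_minimalPeriod]
  set x : X := y.1 (closedPoint (ResidueField V)) with hx
  have hhx : h x = x := by
    exact fix_apply y.1 h hyh _
  have htx : t (closedPoint V) = x := by
    have h1 : (Spec.map ρ) (closedPoint (ResidueField V)) = closedPoint V :=
      IsLocalRing.comap_closedPoint (residue V)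
    exact (comp_apply_eq (Spec.map ρ) t _ _ h1).symm
  obtain ⟨φ', hloc, hφ'⟩ := exists_stalk_factor t x htx
  obtain ⟨g, hg⟩ := exists_stalk_endo h x x hhx
  have hiter : ∀ j : ℕ, ∃ θ : X.presheaf.stalk x ⟶ CommRingCat.of V,
      (∀ a, θ.hom a = φ'.hom (g.hom^[j] a)) ∧
      Spec.map θ ≫ X.fromSpecStalk x =
        (fun t : Spec (CommRingCat.of V) ⟶ X => t ≫ f)^[m * j] t := by
    intro j
    induction j with
    | zero => exact ⟨φ', fun a => rfl, hφ'⟩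
    | succ j ih =>
      obtain ⟨θ, h1, h2⟩ := ih
      refine ⟨g ≫ θ, fun a => ?_, ?_⟩
      · rw [Function.iterate_succ_apply, ← h1]; rfl
      · rw [Spec.map_comp, Category.assoc, hg, ← Category.assoc, h2, ← hh,
          ← Function.iterate_add_apply, mul_add, mul_one, add_comm]
  have hfix : ∀ j, (fun t : Spec (CommRingCat.of V) ⟶ X => t ≫ f)^[m * j] t = t ↔
      ∀ a, φ'.hom (g.hom^[j] a) = φ'.hom a := by
    intro j
    obtain ⟨θ, h1, h2⟩ := hiter j
    rw [← h2]
    conv_lhs => rw [← hφ']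
    constructor
    · intro h3 a
      rw [← h1]
      have := Spec.map_injective ((cancel_mono (X.fromSpecStalk x)).mp h3)
      rw [this]
    · intro h3
      have : θ = φ' := CommRingCat.hom_ext (RingHom.ext fun a => (h1 a).trans (h3 a))
      rw [this]
  have hfink : Finite (X.presheaf.stalk x ⧸ maximalIdeal (X.presheaf.stalk x)) :=
    Finite.of_injective (ResidueField.map φ'.hom) (ResidueField.map φ'.hom).injective
  have hfin2 : Finite (X.presheaf.stalk x ⧸ maximalIdeal (X.presheaf.stalk x) ^ 2) :=
    Ideal.finite_quotient_pow (IsNoetherian.noetherian _) 2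
  obtain ⟨s, hs⟩ := aux_local_s13 ℓ hℓ (A := X.presheaf.stalk x) (by
      rw [mem_maximalIdeal, mem_nonunits_iff]
      intro hu
      have := hu.map φ'.hom
      rw [map_natCast] at this
      exact (mem_maximalIdeal _).mp hℓV this) g.hom φ'.hom r hP ((hfix r).mp (by
        rw [mul_comm]
        exact (show Function.IsPeriodicPt _ r t from htr).mul_const m))
  refine ⟨s, (hdvd _ ((hfix _).mpr hs)).trans ?_⟩
  rw [← mul_assoc]
  exact Nat.mul_dvd_mul_right (Nat.mul_dvd_mul hmdvd (Finset.dvd_prod_of_mem E (Finset.mem_univ y))) _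


/-- Let `F` be a number field with ring of integers `O_F`, and `F^(n)` the
compositum inside a fixed algebraic closure of all extensions of `F` of degree at most `n`.
Let `X` be a proper variety over `Spec O_F` and `f : X ⟶ X` an `O_F`-morphism.  Then
`Per(X(F^(n)), f)` is finite. -/
theorem stmt_13 (F : Type) [Field F] [NumberField F]
    (Ω : Type) [Field Ω] [Algebra F Ω] [IsAlgClosure F Ω]
    (n : ℕ) (hn : 1 ≤ n)
    (X : Scheme) (π : X ⟶ Spec (CommRingCat.of (𝓞 F))) [IsProper π] [IsIntegral X]
    (f : X ⟶ X) (hf : f ≫ π = π) :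
    (PerSet (actPt
      (φ := CommRingCat.ofHom
        ((algebraMap F (compositumOfDegreeLE F Ω n)).comp (algebraMap (𝓞 F) F)))
      f hf)).Finite := by
  have hac : IsAlgClosed Ω := IsAlgClosure.isAlgClosed F
  have halg : Algebra.IsAlgebraic F Ω := IsAlgClosure.isAlgebraic
  have key : ∀ ℓ : ℕ, ℓ.Prime → ∃ C : ℕ, 0 < C ∧ ∀ P : Scheme.PointsOver π (CommRingCat.ofHom
        ((algebraMap F (compositumOfDegreeLE F Ω n)).comp (algebraMap (𝓞 F) F))),
      0 < Function.minimalPeriod (actPt f hf) P →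
      ∃ s : ℕ, Function.minimalPeriod (actPt f hf) P ∣ C * ℓ ^ s := by
    intro ℓ hℓ
    obtain ⟨V, h1, h2, h3⟩ := exists_valuation F Ω n ℓ hℓ (compositumOfDegreeLE F Ω n)
      (fun σ x hx => gal_pow_factorial F Ω n σ x hx)
    exact per_prime _ π f hf V h1 ℓ hℓ h2
  obtain ⟨C₂, hC₂, h₂⟩ := key 2 Nat.prime_two
  obtain ⟨C₃, hC₃, h₃⟩ := key 3 Nat.prime_three
  refine (Set.finite_Iic (C₂ * C₃)).subset ?_
  rintro _ ⟨hr, P, rfl⟩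
  obtain ⟨s, hs⟩ := h₂ P hr
  obtain ⟨t, ht⟩ := h₃ P hr
  refine Nat.le_of_dvd (Nat.mul_pos hC₂ hC₃) ?_
  have e1 := hs.trans (Dvd.intro C₃ (show C₂ * 2 ^ s * C₃ = C₂ * C₃ * 2 ^ s by ring))
  have e2 := ht.trans (Dvd.intro C₂ (show C₃ * 3 ^ t * C₂ = C₂ * C₃ * 3 ^ t by ring))
  have e3 := Nat.dvd_gcd e1 e2
  rw [Nat.gcd_mul_left, Nat.Coprime.pow s t (by norm_num), mul_one] at e3
  exact e3
end
end
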